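/- Fix p > 1 and q > 3/2. For every ε > 0 there exists C = C(ε, p, q) such that every nonnegative Schwartz-class g : ℝ³ → ℝ satisfies the ε-Poincaré inequality ∫_{ℝ³} g^{p+1} dv ≤ ε ∫_{ℝ³} |∇( g^{p/2} ⟨v⟩^{−3/2} )|² dv + C ( ∫_{ℝ³} (⟨v⟩³ g)^q dv )^{2/(2q−3) · (1/q) · q} ∫_{ℝ³} g^p ⟨v⟩^{−3} dv, that is, ∫ g^{p+1} ≤ ε ‖∇(g^{p/2}⟨·⟩^{−3/2})‖_{L²}² + C ‖⟨·⟩³ g‖_{L^q}^{2q/(2q−3)} ∫ g^p ⟨v⟩^{−3} dv. -/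

import Mathlib

open MeasureTheory Real Filter Set

noncomputable section

/-- Velocity space ℝ³. -/
abbrev V3 : Type := EuclideanSpace ℝ (Fin 3)

/-- Japanese bracket ⟨v⟩ = (1+|v|²)^{1/2}. -/
def jap (v : V3) : ℝ := Real.sqrt (1 + ‖v‖ ^ 2)

/-- Partial derivative in the i-th coordinate direction. -/
def pd (i : Fin 3) (g : V3 → ℝ) (v : V3) : ℝ :=
  fderiv ℝ g v (EuclideanSpace.single i 1)

/-- Projection matrix Π(z) = Id − z⊗z/|z|². -/
def projPi (z : V3) (i j : Fin 3) : ℝ :=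
  (if i = j then (1 : ℝ) else 0) - z i * z j / ‖z‖ ^ 2

/-- Landau–Coulomb diffusion matrix A[f]. -/
def coeffA (f : V3 → ℝ) (v : V3) (i j : Fin 3) : ℝ :=
  (8 * π)⁻¹ * ∫ w : V3, projPi (v - w) i j / ‖v - w‖ * f w

/-- Newtonian potential a[f] = (−Δ)⁻¹ f. -/
def coeffa (f : V3 → ℝ) (v : V3) : ℝ :=
  (4 * π)⁻¹ * ∫ w : V3, f w / ‖v - w‖

/-- The homogeneous Landau–Coulomb equation
    ∂_t f = ∇·(A[f]∇f − f ∇a[f]), pointwise at (t,v). -/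
def LandauEqAt (f : ℝ → V3 → ℝ) (t : ℝ) (v : V3) : Prop :=
  deriv (fun s => f s v) t =
    ∑ i : Fin 3, pd i
      (fun w => (∑ j : Fin 3, coeffA (f t) w i j * pd j (f t) w)
        - f t w * pd i (coeffa (f t)) w) v

/-- Normalization: unit mass, zero momentum, energy 3. -/
def IsNormalized (f : V3 → ℝ) : Prop :=
  (∫ v : V3, f v) = 1 ∧ (∀ i : Fin 3, (∫ v : V3, f v * v i) = 0) ∧
    (∫ v : V3, f v * ‖v‖ ^ 2) = 3

/-- Schwartz class function. -/
def IsSchwartz (g : V3 → ℝ) : Prop := ∃ h : SchwartzMap V3 ℝ, ⇑h = g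

/-- Distributional (weak) solution of the Landau–Coulomb equation on (0,T). -/
def IsWeakLandauSolution (T : ℝ) (g : ℝ → V3 → ℝ) : Prop :=
  ∀ φ : ℝ × V3 → ℝ, ContDiff ℝ (⊤ : ℕ∞) φ → HasCompactSupport φ →
    (Function.support φ ⊆ Set.Ioo 0 T ×ˢ (Set.univ : Set V3)) →
    (∫ t in Set.Ioo 0 T, ∫ v : V3, φ (t, v) * deriv (fun s => g s v) t) =
      - ∫ t in Set.Ioo 0 T, ∫ v : V3, ∑ i : Fin 3,
          (fderiv ℝ φ (t, v) (0, EuclideanSpace.single i 1)) *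
          ((∑ j : Fin 3, coeffA (g t) v i j * pd j (g t) v)
            - g t v * pd i (coeffa (g t)) v)

/-- Membership in L^r(0,T;L^p(ℝ³)). -/
def MemLrLp (r p T : ℝ) (g : ℝ → V3 → ℝ) : Prop :=
  (∀ᵐ t ∂(volume.restrict (Set.Ioo 0 T)), Integrable (fun v : V3 => |g t v| ^ p)) ∧
  IntegrableOn (fun t => (∫ v : V3, |g t v| ^ p) ^ (r / p)) (Set.Ioo 0 T)

/-- g ∈ W^{1,∞}(Ω) for every Ω compactly contained in (0,T] × ℝ³,
    i.e. g is Lipschitz on every compact subset of (0,T] × ℝ³. -/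
def LocLipschitz (T : ℝ) (g : ℝ → V3 → ℝ) : Prop :=
  ∀ K : Set (ℝ × V3), IsCompact K → K ⊆ Set.Ioc 0 T ×ˢ (Set.univ : Set V3) →
    ∃ L : NNReal, LipschitzOnWith L (fun q : ℝ × V3 => g q.1 q.2) K

open scoped ENNReal NNReal Topology

lemma sobolev_aux : ∃ K : ℝ≥0, ∀ w : V3 → ℝ, ContDiff ℝ 1 w → MemLp w 2 volume →
    eLpNorm w 6 volume ≤ K * eLpNorm (fderiv ℝ w) 2 volume := by
  refine ⟨eLpNormLESNormFDerivOfEqInnerConst (volume : Measure V3) 2, ?_⟩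
  intro w hw hw2
  set K := eLpNormLESNormFDerivOfEqInnerConst (volume : Measure V3) 2
  let χ : ContDiffBump (0 : V3) := ⟨1, 2, by norm_num, by norm_num⟩
  have hχ : ContDiff ℝ 1 (χ : V3 → ℝ) := χ.contDiff
  obtain ⟨M, hM⟩ : ∃ M, ∀ v, ‖fderiv ℝ (χ : V3 → ℝ) v‖ ≤ M :=
    (χ.hasCompactSupport.fderiv ℝ).exists_bound_of_continuous (hχ.continuous_fderiv (by norm_num))
  have hM0 : 0 ≤ M := (norm_nonneg _).trans (hM 0)
  let c : ℕ → ℝ := fun n => ((n : ℝ) + 1)⁻¹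
  have hc : ∀ n, 0 < c n := fun n => by positivity
  have hc0 : Tendsto c atTop (𝓝 0) := by
    simpa [c] using tendsto_one_div_add_atTop_nhds_zero_nat (𝕜 := ℝ)
  let W : ℕ → V3 → ℝ := fun n v => χ (c n • v) * w v
  have hχn : ∀ n, ContDiff ℝ 1 (fun v : V3 => χ (c n • v)) := fun n =>
    hχ.comp (contDiff_const_smul (c n))
  have hW : ∀ n, ContDiff ℝ 1 (W n) := fun n => (hχn n).mul hw
  have hWs : ∀ n, HasCompactSupport (W n) := fun n => by
    have : HasCompactSupport (fun v : V3 => χ (c n • v)) :=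
      χ.hasCompactSupport.comp_homeomorph (Homeomorph.smulOfNeZero (c n) (hc n).ne')
    exact this.mul_right
  have hfd : ∀ n v, ‖fderiv ℝ (W n) v‖ ≤ ‖(‖fderiv ℝ w v‖ + (M * c n) * ‖w v‖)‖ := by
    intro n v
    have h1 : HasFDerivAt (fun v : V3 => χ (c n • v)) (c n • fderiv ℝ (χ : V3 → ℝ) (c n • v)) v := by
      have h := ((hχ.differentiable (by norm_num)) (c n • v)).hasFDerivAt.comp v
        ((hasFDerivAt_id v).const_smul (c n))
      have e : c n • fderiv ℝ (χ : V3 → ℝ) (c n • v) =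
          (fderiv ℝ (χ : V3 → ℝ) (c n • v)).comp (c n • ContinuousLinearMap.id ℝ V3) := by
        ext x; simp
      rw [e]
      exact h
    have h2 := h1.mul ((hw.differentiable (by norm_num)) v).hasFDerivAt
    have h3 : fderiv ℝ (W n) v = _ := h2.fderiv
    rw [h3, Real.norm_of_nonneg (by have := hc n; positivity)]
    refine (norm_add_le _ _).trans ?_
    rw [norm_smul, norm_smul, norm_smul]
    have h4 : ‖χ (c n • v)‖ ≤ 1 := by
      rw [Real.norm_of_nonneg χ.nonneg]; exact χ.le_one
    have h5 := hM (c n • v)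
    rw [Real.norm_of_nonneg (hc n).le]
    have := hc n
    calc _ ≤ 1 * ‖fderiv ℝ w v‖ + ‖w v‖ * (c n * M) := by gcongr
      _ = _ := by ring
  have hDc : Continuous (fderiv ℝ w) := hw.continuous_fderiv (by norm_num)
  have hb : ∀ n, eLpNorm (W n) 6 volume ≤
      K * (eLpNorm (fderiv ℝ w) 2 volume + ENNReal.ofReal (M * c n) * eLpNorm w 2 volume) := by
    intro n
    have h := eLpNorm_le_eLpNorm_fderiv_of_eq_inner (volume : Measure V3) (hW n) (hWs n)
      (p := 2) (p' := 6) (by norm_num) (by simp) (by simp; norm_num)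
    refine (le_trans (by simpa using h) (mul_le_mul_right (α := ℝ≥0∞) ?_ _))
    calc eLpNorm (fderiv ℝ (W n)) 2 volume
        ≤ eLpNorm (fun v => ‖fderiv ℝ w v‖ + (M * c n) * ‖w v‖) 2 volume := eLpNorm_mono (hfd n)
      _ ≤ eLpNorm (fun v => ‖fderiv ℝ w v‖) 2 volume
          + eLpNorm (fun v => (M * c n) * ‖w v‖) 2 volume :=
          eLpNorm_add_le hDc.norm.aestronglyMeasurable
            (continuous_const.mul hw.continuous.norm).aestronglyMeasurable (by norm_num)
      _ = _ := by
          have := eLpNorm_const_smul (M * c n) (fun v => ‖w v‖) 2 (volume : Measure V3)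
          rw [eLpNorm_norm]
          congr 1
          rw [show (fun v => (M * c n) * ‖w v‖) = (M * c n) • (fun v => ‖w v‖) from rfl, this,
            eLpNorm_norm, Real.enorm_of_nonneg (mul_nonneg hM0 (hc n).le)]
  have hlim := Lp.eLpNorm_lim_le_liminf_eLpNorm (μ := (volume : Measure V3)) (p := 6) (f := W)
    (fun n => (hW n).continuous.aestronglyMeasurable) w (by
      refine Eventually.of_forall fun v => ?_
      have : Tendsto (fun n => χ (c n • v)) atTop (𝓝 (χ ((0:ℝ) • v))) :=
        (hχ.continuous.tendsto _).comp (hc0.smul_const v)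
      have h1 : χ ((0:ℝ) • v) = 1 := χ.one_of_mem_closedBall (by simp [χ])
      rw [h1] at this
      simpa [W] using this.mul_const (w v))
  refine hlim.trans ?_
  have hT : Tendsto (fun n => (K : ℝ≥0∞) * (eLpNorm (fderiv ℝ w) 2 volume +
      ENNReal.ofReal (M * c n) * eLpNorm w 2 volume)) atTop
      (𝓝 ((K : ℝ≥0∞) * (eLpNorm (fderiv ℝ w) 2 volume + ENNReal.ofReal (M * 0) * eLpNorm w 2 volume))) := by
    refine ENNReal.Tendsto.const_mul (Tendsto.add tendsto_const_nhds ?_) (Or.inr ENNReal.coe_ne_top)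
    exact ENNReal.Tendsto.mul_const (ENNReal.tendsto_ofReal (hc0.const_mul M)) (Or.inr hw2.2.ne)
  have : (K : ℝ≥0∞) * (eLpNorm (fderiv ℝ w) 2 volume + ENNReal.ofReal (M * 0) * eLpNorm w 2 volume)
      = K * eLpNorm (fderiv ℝ w) 2 volume := by simp
  rw [← this, ← hT.liminf_eq]
  exact liminf_le_liminf (Eventually.of_forall hb)

lemma schwartz_taylor (g : SchwartzMap V3 ℝ) : ∃ M : ℝ, 0 ≤ M ∧ ∀ x y : V3,
    ‖g y - g x - fderiv ℝ g x (y - x)‖ ≤ M * ‖y - x‖ ^ 2 := by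
  obtain ⟨M, hM0, hM⟩ := g.decay 0 2
  refine ⟨M, hM0.le, fun x y => ?_⟩
  have hg : ContDiff ℝ 2 g := g.smooth 2
  have hg1 : ContDiff ℝ 1 (fderiv ℝ g) := hg.fderiv_right (by norm_num)
  have hlip : ∀ z, ‖fderiv ℝ g z - fderiv ℝ g x‖ ≤ M * ‖z - x‖ := fun z => by
    refine Convex.norm_image_sub_le_of_norm_fderiv_le (𝕜 := ℝ) (s := univ)
      (fun z _ => hg1.differentiable (by norm_num) z) (fun z _ => ?_) convex_univ trivial trivial
    have := hM z
    rw [pow_zero, one_mul, ← norm_iteratedFDeriv_fderiv (n := 1), norm_iteratedFDeriv_one] at this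
    exact this
  have := Convex.norm_image_sub_le_of_norm_fderiv_le' (𝕜 := ℝ) (f := g) (x := x) (y := y)
    (s := Metric.closedBall x ‖y - x‖) (φ := fderiv ℝ g x) (C := M * ‖y - x‖)
    (fun z _ => hg.differentiable (by norm_num) z) (fun z hz => (hlip z).trans ?_)
    (convex_closedBall _ _) (by simp) (by simp [dist_eq_norm])
  · calc _ ≤ _ := this
      _ = _ := by ring
  · gcongr
    simpa [dist_eq_norm] using hz

lemma schwartz_glaeser (g : SchwartzMap V3 ℝ) (hg : ∀ v, 0 ≤ g v) : ∃ M : ℝ, 0 ≤ M ∧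
    (∀ x y : V3, ‖g y - g x - fderiv ℝ g x (y - x)‖ ≤ M * ‖y - x‖ ^ 2) ∧
    ∀ x : V3, ‖fderiv ℝ g x‖ ≤ 2 * √M * √(g x) := by
  obtain ⟨M, hM0, hM⟩ := schwartz_taylor g
  refine ⟨M, hM0, hM, fun x => ?_⟩
  refine ContinuousLinearMap.opNorm_le_bound _ (by positivity) fun e => ?_
  have key : ∀ t : ℝ, 0 ≤ (M * ‖e‖ ^ 2) * (t * t) + (fderiv ℝ g x e) * t + g x := by
    intro t
    have h := hM x (x + t • e)
    rw [add_sub_cancel_left, map_smul, norm_smul, mul_pow, Real.norm_eq_abs t, sq_abs] at h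
    have h2 := (abs_le.1 h).2
    have h3 := hg (x + t • e)
    simp only [smul_eq_mul] at h2
    nlinarith
  have hd := discrim_le_zero key
  unfold discrim at hd
  have : (fderiv ℝ g x e) ^ 2 ≤ (2 * √M * √(g x) * ‖e‖) ^ 2 := by
    rw [mul_pow, mul_pow, mul_pow, Real.sq_sqrt hM0, Real.sq_sqrt (hg x)]
    linarith
  exact abs_le_of_sq_le_sq this (by positivity)

lemma rpow_hasFDerivAt (g : SchwartzMap V3 ℝ) (hg : ∀ v, 0 ≤ g v) (p : ℝ) (hp : 1 < p) (x : V3) :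
    HasFDerivAt (fun v => g v ^ (p / 2)) ((p / 2 * g x ^ (p / 2 - 1)) • fderiv ℝ g x) x := by
  have hd : HasFDerivAt g (fderiv ℝ g x) x := ((g.smooth 1).differentiable (by norm_num) x).hasFDerivAt
  rcases (hg x).eq_or_lt with h0 | h0
  · obtain ⟨M, hM0, hM, hG⟩ := schwartz_glaeser g hg
    have hz : fderiv ℝ g x = 0 := by
      have := hG x
      rw [← h0] at this
      simpa using this
    rw [hz, smul_zero, hasFDerivAt_iff_isLittleO_nhds_zero]
    have hb : ∀ h : V3, ‖g (x + h) ^ (p / 2)‖ ≤ M ^ (p/2) * ‖(‖h‖ ^ p)‖ := fun h => by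
      have h1 := hM x (x + h)
      rw [hz, ← h0, add_sub_cancel_left] at h1
      simp only [sub_zero, _root_.zero_apply, Real.norm_of_nonneg (hg _)] at h1
      rw [Real.norm_of_nonneg (by have := hg (x+h); positivity), Real.norm_of_nonneg (by positivity)]
      calc g (x + h) ^ (p / 2) ≤ (M * ‖h‖ ^ 2) ^ (p/2) := Real.rpow_le_rpow (hg _) h1 (by linarith)
        _ = _ := by
          rw [Real.mul_rpow hM0 (by positivity), ← Real.rpow_natCast, ← Real.rpow_mul (norm_nonneg _)]
          congr 2; push_cast; ring
    have hO : (fun h : V3 => g (x + h) ^ (p / 2)) =O[𝓝 0] (fun h => ‖h‖ ^ p) :=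
      Asymptotics.IsBigO.of_bound _ (Eventually.of_forall hb)
    have ho : (fun h : V3 => ‖h‖ ^ p) =o[𝓝 0] (fun h => h) := by
      rw [Asymptotics.isLittleO_iff]
      intro c hc
      have ht : Tendsto (fun h : V3 => ‖h‖ ^ (p - 1)) (𝓝 0) (𝓝 0) := by
        have : Continuous (fun h : V3 => ‖h‖ ^ (p - 1)) :=
          continuous_norm.rpow_const (fun _ => Or.inr (by linarith))
        have := this.tendsto 0
        rwa [norm_zero, Real.zero_rpow (by linarith)] at this
      filter_upwards [ht.eventually (ge_mem_nhds hc)] with h hh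
      rw [Real.norm_of_nonneg (by positivity)]
      have : ‖h‖ ^ p = ‖h‖ ^ (p - 1) * ‖h‖ := by
        rcases (norm_nonneg h).eq_or_lt with h0 | h0
        · rw [← h0, Real.zero_rpow (by linarith)]; simp
        · rw [← Real.rpow_add_one h0.ne']; congr 1; ring
      rw [this]; gcongr
    have := hO.trans_isLittleO ho
    simpa [← h0, Real.zero_rpow (by linarith : p / 2 ≠ 0)] using this
  · exact hd.rpow_const (Or.inl h0.ne')

lemma rpow_fderiv_bound (g : SchwartzMap V3 ℝ) (hg : ∀ v, 0 ≤ g v) (p : ℝ) (hp : 1 < p) :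
    ∃ B : ℝ, 0 ≤ B ∧ ∀ x, ‖(p / 2 * g x ^ (p / 2 - 1)) • fderiv ℝ g x‖ ≤ B * g x ^ ((p - 1) / 2) := by
  obtain ⟨M, hM0, hM, hG⟩ := schwartz_glaeser g hg
  refine ⟨p / 2 * (2 * √M), by positivity, fun x => ?_⟩
  rw [norm_smul, Real.norm_of_nonneg (by have := hg x; positivity)]
  rcases (hg x).eq_or_lt with h0 | h0
  · have := hG x
    rw [← h0] at this ⊢
    rw [Real.zero_rpow (by linarith : (p-1)/2 ≠ 0)]
    have : ‖fderiv ℝ g x‖ = 0 := le_antisymm (by simpa using this) (norm_nonneg _)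
    rw [this]; simp
  · calc _ ≤ p / 2 * g x ^ (p / 2 - 1) * (2 * √M * √(g x)) := by gcongr; exact hG x
      _ = p / 2 * (2 * √M) * (g x ^ (p/2 - 1) * √(g x)) := by ring
      _ = _ := by
        rw [Real.sqrt_eq_rpow (x := g x), ← Real.rpow_add h0]; congr 2; ring

lemma rpow_contDiff (g : SchwartzMap V3 ℝ) (hg : ∀ v, 0 ≤ g v) (p : ℝ) (hp : 1 < p) :
    ContDiff ℝ 1 (fun v => g v ^ (p / 2)) := by
  rw [contDiff_one_iff_hasFDerivAt]
  refine ⟨_, ?_, rpow_hasFDerivAt g hg p hp⟩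
  rw [continuous_iff_continuousAt]
  intro x
  have hdc : Continuous (fderiv ℝ g) := (g.smooth 1).continuous_fderiv (by norm_num)
  rcases (hg x).eq_or_lt with h0 | h0
  · obtain ⟨B, hB0, hB⟩ := rpow_fderiv_bound g hg p hp
    have hz : (p / 2 * g x ^ (p / 2 - 1)) • fderiv ℝ g x = 0 := by
      have := hB x
      rw [← h0, Real.zero_rpow (by linarith : (p-1)/2 ≠ 0), mul_zero] at this
      rw [← h0]
      exact norm_le_zero_iff.1 this
    unfold ContinuousAt
    beta_reduce
    rw [hz]
    refine squeeze_zero_norm hB ?_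
    have : Continuous (fun x => B * g x ^ ((p - 1) / 2)) :=
      continuous_const.mul (g.continuous.rpow_const (fun _ => Or.inr (by linarith)))
    have := this.tendsto x
    rwa [← h0, Real.zero_rpow (by linarith : (p-1)/2 ≠ 0), mul_zero] at this
  · exact ((continuousAt_const.mul (g.continuous.continuousAt.rpow_const (Or.inl h0.ne')))).smul hdc.continuousAt

lemma jap_eq (v : V3) (a : ℝ) : jap v ^ a = (1 + ‖v‖ ^ 2) ^ (a / 2) := by
  unfold jap
  rw [Real.sqrt_eq_rpow, ← Real.rpow_mul (by positivity)]; congr 1; ring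

lemma jap_pos (v : V3) : 0 < jap v := Real.sqrt_pos.2 (by positivity)

lemma jap_cont : Continuous jap := by unfold jap; fun_prop

lemma jap_le (v : V3) : jap v ≤ 1 + ‖v‖ := by
  refine Real.sqrt_le_iff.2 ⟨by positivity, ?_⟩
  nlinarith [norm_nonneg v]

lemma integrable_aux (g : SchwartzMap V3 ℝ) (hg : ∀ v, 0 ≤ g v) (a s : ℝ) (ha : 0 ≤ a) (hs : 0 < s) :
    Integrable (fun v => jap v ^ a * g v ^ s) := by
  obtain ⟨k, hk⟩ := exists_nat_gt ((a + 4) / s)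
  rw [div_lt_iff₀ hs] at hk
  obtain ⟨C, hC0, hC⟩ : ∃ C : ℝ, 0 ≤ C ∧ ∀ v, (1 + ‖v‖) ^ k * g v ≤ C := by
    refine ⟨2 ^ k * ((Finset.Iic (k, 0)).sup fun m => SchwartzMap.seminorm ℝ m.1 m.2) g, by positivity, fun v => ?_⟩
    · have := SchwartzMap.one_add_le_sup_seminorm_apply (𝕜 := ℝ) (m := (k, 0)) (k := k) (n := 0)
        le_rfl le_rfl g v
      rw [norm_iteratedFDeriv_zero, Real.norm_of_nonneg (hg v)] at this
      exact this
  have hI := (integrable_one_add_norm (E := V3) (μ := volume) (r := 4) (by simp; norm_num)).const_mul (C ^ s)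
  refine hI.mono' ?_ (Eventually.of_forall fun v => ?_)
  · exact ((jap_cont.rpow_const (fun v => Or.inl (jap_pos v).ne')).mul
      (g.continuous.rpow_const (fun _ => Or.inr hs.le))).aestronglyMeasurable
  · have hj := jap_pos v
    have hgv := hg v
    have h1 : (1:ℝ) ≤ 1 + ‖v‖ := by linarith [norm_nonneg v]
    have h0 : (0:ℝ) < 1 + ‖v‖ := by linarith
    rw [Real.norm_of_nonneg (by positivity)]
    have hgb : g v ≤ C * (1 + ‖v‖) ^ (-(k:ℝ)) := by
      rw [Real.rpow_neg h0.le, Real.rpow_natCast, ← div_eq_mul_inv, le_div_iff₀ (by positivity), mul_comm]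
      exact hC v
    calc jap v ^ a * g v ^ s ≤ (1 + ‖v‖) ^ a * (C * (1 + ‖v‖) ^ (-(k:ℝ))) ^ s := by
          gcongr; exact jap_le v
      _ = C ^ s * (1 + ‖v‖) ^ (a - k * s) := by
          rw [Real.mul_rpow hC0 (by positivity), ← Real.rpow_mul h0.le, sub_eq_add_neg,
            Real.rpow_add h0]
          ring_nf
      _ ≤ C ^ s * (1 + ‖v‖) ^ (-4 : ℝ) := by
          gcongr
          linarith

lemma integrable_pow (g : SchwartzMap V3 ℝ) (hg : ∀ v, 0 ≤ g v) (s : ℝ) (hs : 0 < s) :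
    Integrable (fun v => g v ^ s) := by
  simpa using integrable_aux g hg 0 s le_rfl hs

lemma jap_fderiv (x : V3) : HasFDerivAt (fun v => jap v ^ (-(3:ℝ) / 2))
    ((-(3:ℝ) / 2 / 2 * (1 + ‖x‖ ^ 2) ^ (-(3:ℝ) / 2 / 2 - 1)) • ((2:ℝ) • innerSL ℝ x)) x := by
  have h : HasFDerivAt (fun v : V3 => 1 + ‖v‖ ^ 2) ((2:ℝ) • innerSL ℝ x) x := by
    have := (hasStrictFDerivAt_norm_sq x).hasFDerivAt.const_add 1
    rw [← Nat.cast_smul_eq_nsmul ℝ] at this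
    exact_mod_cast this
  have h2 := h.rpow_const (p := -(3:ℝ) / 2 / 2) (Or.inl (by positivity))
  simp_rw [jap_eq]
  exact h2

lemma jap_contDiff : ContDiff ℝ 1 (fun v => jap v ^ (-(3:ℝ) / 2)) := by
  simp_rw [jap_eq]
  have : ContDiff ℝ 1 (fun v : V3 => 1 + ‖v‖ ^ 2) := contDiff_const.add (contDiff_norm_sq ℝ)
  exact this.rpow_const_of_ne (fun v => by positivity)

lemma jap_fderiv_bound (x : V3) : ‖fderiv ℝ (fun v => jap v ^ (-(3:ℝ) / 2)) x‖ ≤ 2 := by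
  rw [(jap_fderiv x).fderiv, norm_smul, norm_smul, innerSL_apply_norm, norm_mul,
    Real.norm_of_nonneg (by positivity : 0 ≤ (1 + ‖x‖ ^ 2) ^ (-(3:ℝ) / 2 / 2 - 1))]
  have h1 : (1 + ‖x‖ ^ 2) ^ (-(3:ℝ) / 2 / 2 - 1) ≤ (1 + ‖x‖ ^ 2) ^ (-1:ℝ) :=
    Real.rpow_le_rpow_of_exponent_le (by nlinarith [norm_nonneg x]) (by norm_num)
  have h2 : (1 + ‖x‖ ^ 2) ^ (-1:ℝ) * ‖x‖ ≤ 1 := by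
    rw [Real.rpow_neg_one, inv_mul_le_iff₀ (by positivity)]
    nlinarith [norm_nonneg x, sq_nonneg (‖x‖ - 1)]
  have h3 : (1 + ‖x‖ ^ 2) ^ (-(3:ℝ) / 2 / 2 - 1) * ‖x‖ ≤ 1 := le_trans (by gcongr) h2
  norm_num
  norm_num at h3
  nlinarith

lemma jap_le_one (x : V3) : jap x ^ (-(3:ℝ) / 2) ≤ 1 := by
  rw [jap_eq]
  exact Real.rpow_le_one_of_one_le_of_nonpos (by nlinarith [norm_nonneg x]) (by norm_num)

lemma norm_sq_le_sum (T : V3 →L[ℝ] ℝ) : ‖T‖ ^ 2 ≤ ∑ i : Fin 3, (T (EuclideanSpace.single i 1)) ^ 2 := by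
  have h0 : 0 ≤ ∑ i : Fin 3, (T (EuclideanSpace.single i 1)) ^ 2 := Finset.sum_nonneg fun i _ => sq_nonneg _
  rw [← Real.sq_sqrt h0]
  gcongr
  refine ContinuousLinearMap.opNorm_le_bound _ (by positivity) fun x => ?_
  have hx : T x = ∑ i : Fin 3, T (EuclideanSpace.single i 1) * x i := by
    have : x = ∑ i : Fin 3, x i • EuclideanSpace.single i (1:ℝ) := by
      ext j; fin_cases j <;> simp [Fin.sum_univ_three]
    conv_lhs => rw [this]
    simp [map_sum, mul_comm]
  rw [hx, EuclideanSpace.norm_eq, ← Real.sqrt_mul h0]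
  refine Real.abs_le_sqrt ?_
  simpa using Finset.sum_mul_sq_le_sq_mul_sq Finset.univ (fun i => T (EuclideanSpace.single i 1)) (fun i => x i)

lemma holder_aux (q : ℝ) (hq : 3 / 2 < q) (h w : V3 → ℝ) (hh : Continuous h) (hw : Continuous w)
    (hh0 : ∀ v, 0 ≤ h v) (hw0 : ∀ v, 0 ≤ w v) (hw2 : Integrable (fun v => w v ^ 2))
    (hhq : Integrable (fun v => h v ^ q)) (Z : ℝ) (hZ0 : 0 ≤ Z)
    (hZ : ∫⁻ v, ENNReal.ofReal (w v ^ 6) ≤ ENNReal.ofReal Z) :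
    ∫ v, h v * w v ^ 2 ≤
      (∫ v, h v ^ q) ^ (1 / q) * (∫ v, w v ^ 2) ^ (1 - 3 / (2 * q)) * Z ^ (1 / (2 * q)) := by
  have hq0 : 0 < q := by linarith
  have hθ : 0 ≤ 1 - 3 / (2 * q) := by
    rw [sub_nonneg, div_le_one (by positivity)]; linarith
  have hI0 : 0 ≤ ∫ v, h v ^ q := integral_nonneg fun v => Real.rpow_nonneg (hh0 v) _
  have hJ0 : 0 ≤ ∫ v, w v ^ 2 := integral_nonneg fun v => sq_nonneg _
  rw [integral_eq_lintegral_of_nonneg_ae (Eventually.of_forall fun v => mul_nonneg (hh0 v) (sq_nonneg _))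
    (hh.mul (hw.pow 2)).aestronglyMeasurable]
  refine ENNReal.toReal_le_of_le_ofReal (by positivity) ?_
  have key := ENNReal.lintegral_prod_norm_pow_le (μ := (volume : Measure V3)) (Finset.univ : Finset (Fin 3))
    (f := ![fun v => ENNReal.ofReal (h v ^ q), fun v => ENNReal.ofReal (w v ^ 2),
      fun v => ENNReal.ofReal (w v ^ 6)]) (p := ![1 / q, 1 - 3 / (2 * q), 1 / (2 * q)])
    (by
      intro i _
      fin_cases i
      · exact ((hh.rpow_const (fun _ => Or.inr hq0.le)).measurable.ennreal_ofReal).aemeasurable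
      · exact ((hw.pow 2).measurable.ennreal_ofReal).aemeasurable
      · exact ((hw.pow 6).measurable.ennreal_ofReal).aemeasurable)
    (by simp [Fin.sum_univ_three]; field_simp; ring)
    (by
      intro i _
      fin_cases i
      · simp; positivity
      · simpa using hθ
      · simp; positivity)
  simp only [Fin.prod_univ_three, Matrix.cons_val_zero, Matrix.cons_val_one, Matrix.cons_val] at key
  calc _ = _ := ?_
    _ ≤ _ := key
    _ ≤ _ := ?_
  · refine lintegral_congr fun v => ?_
    have a := hh0 v
    have b := hw0 v
    rw [ENNReal.ofReal_rpow_of_nonneg (by positivity) (by positivity),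
      ENNReal.ofReal_rpow_of_nonneg (by positivity) hθ,
      ENNReal.ofReal_rpow_of_nonneg (by positivity) (by positivity),
      ← ENNReal.ofReal_mul (by positivity), ← ENNReal.ofReal_mul (by positivity)]
    congr 1
    rw [← Real.rpow_mul a, mul_one_div_cancel hq0.ne', Real.rpow_one, mul_assoc]
    congr 1
    rw [← Real.rpow_natCast (w v) 6, ← Real.rpow_natCast (w v) 2, ← Real.rpow_mul b, ← Real.rpow_mul b,
      ← Real.rpow_add_of_nonneg b (by positivity) (by positivity)]
    congr 1
    push_cast
    field_simp
    ring
  · rw [ENNReal.ofReal_mul (by positivity), ENNReal.ofReal_mul (by positivity),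
      ← ENNReal.ofReal_rpow_of_nonneg hI0 (by positivity), ← ENNReal.ofReal_rpow_of_nonneg hJ0 hθ,
      ← ENNReal.ofReal_rpow_of_nonneg hZ0 (by positivity),
      ofReal_integral_eq_lintegral_ofReal hhq (Eventually.of_forall fun v => Real.rpow_nonneg (hh0 v) _),
      ofReal_integral_eq_lintegral_ofReal hw2 (Eventually.of_forall fun v => sq_nonneg _)]
    gcongr

lemma young_aux (q : ℝ) (hq : 3 / 2 < q) (K ε : ℝ) (hK : 0 ≤ K) (hε : 0 < ε) :
    ∃ C : ℝ, 0 < C ∧ ∀ H X Y : ℝ, 0 ≤ H → 0 ≤ X → 0 ≤ Y →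
      H ^ (1 / q) * X ^ (1 - 3 / (2 * q)) * (K * Y ^ 3) ^ (1 / (2 * q)) ≤
        ε * Y + C * H ^ (2 / (2 * q - 3)) * X := by
  have hq0 : 0 < q := by linarith
  have hq3 : 0 < 2 * q - 3 := by linarith
  set θ := 3 / (2 * q) with hθd
  have hθ0 : 0 < θ := by positivity
  have hθ1 : 0 < 1 - θ := by
    rw [sub_pos, hθd, div_lt_one (by positivity)]; linarith
  set A := (K ^ (1 / (2 * q)) * ε ^ (-θ)) ^ (1 / (1 - θ)) with hA
  have hA0 : 0 ≤ A := by positivity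
  refine ⟨A + 1, by positivity, fun H X Y hH hX hY => ?_⟩
  have hyoung := Real.geom_mean_le_arith_mean2_weighted hθ0.le hθ1.le
    (by positivity : 0 ≤ ε * Y) (by positivity : 0 ≤ A * H ^ (2 / (2 * q - 3)) * X) (by ring)
  calc _ = (ε * Y) ^ θ * (A * H ^ (2 / (2 * q - 3)) * X) ^ (1 - θ) := by
        rw [Real.mul_rpow hε.le hY, Real.mul_rpow (by positivity) hX, Real.mul_rpow hA0 (by positivity),
          Real.mul_rpow hK (by positivity), hA, ← Real.rpow_mul (by positivity), ← Real.rpow_mul hH,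
          one_div_mul_cancel hθ1.ne', Real.rpow_one, Real.rpow_neg hε.le, ← Real.rpow_natCast Y 3,
          ← Real.rpow_mul hY]
        have e1 : 2 / (2 * q - 3) * (1 - θ) = 1 / q := by rw [hθd]; field_simp
        have e2 : ((3:ℕ):ℝ) * (1 / (2 * q)) = θ := by rw [hθd]; push_cast; ring
        have e3 : ε ^ θ ≠ 0 := (Real.rpow_pos_of_pos hε _).ne'
        rw [e1, e2]
        field_simp
    _ ≤ θ * (ε * Y) + (1 - θ) * (A * H ^ (2 / (2 * q - 3)) * X) := hyoung
    _ ≤ 1 * (ε * Y) + 1 * ((A + 1) * H ^ (2 / (2 * q - 3)) * X) := by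
        gcongr
        · linarith
        · linarith
        · linarith
    _ = _ := by ring

lemma w_props (p : ℝ) (hp : 1 < p) (g : SchwartzMap V3 ℝ) (hg : ∀ v, 0 ≤ g v) :
    ContDiff ℝ 1 (fun w => g w ^ (p / 2) * jap w ^ (-(3 : ℝ) / 2)) ∧
    Integrable (fun v => (g v ^ (p / 2) * jap v ^ (-(3 : ℝ) / 2)) ^ 2) ∧
    Integrable (fun v => ‖fderiv ℝ (fun w => g w ^ (p / 2) * jap w ^ (-(3 : ℝ) / 2)) v‖ ^ 2) := by
  have hG := rpow_contDiff g hg p hp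
  have hc : ContDiff ℝ 1 (fun w => g w ^ (p / 2) * jap w ^ (-(3 : ℝ) / 2)) := hG.mul jap_contDiff
  have hsq : ∀ v, (g v ^ (p / 2)) ^ 2 = g v ^ p := fun v => by
    rw [← Real.rpow_natCast, ← Real.rpow_mul (hg v)]; congr 1; push_cast; ring
  have hsq' : ∀ v, (g v ^ ((p - 1) / 2)) ^ 2 = g v ^ (p - 1) := fun v => by
    rw [← Real.rpow_natCast, ← Real.rpow_mul (hg v)]; congr 1; push_cast; ring
  have hp1 := integrable_pow g hg p (by linarith)
  have hp2 := integrable_pow g hg (p - 1) (by linarith)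
  refine ⟨hc, ?_, ?_⟩
  · refine hp1.mono' (hc.continuous.pow 2).aestronglyMeasurable (Eventually.of_forall fun v => ?_)
    have hj := jap_pos v
    have hj1 := jap_le_one v
    have hgv := hg v
    rw [Real.norm_of_nonneg (by positivity), mul_pow, hsq]
    have : (jap v ^ (-(3 : ℝ) / 2)) ^ 2 ≤ 1 := pow_le_one₀ (by positivity) hj1
    exact mul_le_of_le_one_right (by positivity) this
  · obtain ⟨B, hB0, hB⟩ := rpow_fderiv_bound g hg p hp
    refine ((hp2.const_mul (2 * B ^ 2)).add (hp1.const_mul 8)).mono'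
      ((hc.continuous_fderiv (by norm_num)).norm.pow 2).aestronglyMeasurable
      (Eventually.of_forall fun v => ?_)
    have hj := jap_pos v
    have hj1 := jap_le_one v
    have hgv := hg v
    have hd : fderiv ℝ (fun w => g w ^ (p / 2) * jap w ^ (-(3 : ℝ) / 2)) v = _ :=
      ((rpow_hasFDerivAt g hg p hp v).mul
        (jap_contDiff.differentiable (by norm_num) v).hasFDerivAt).fderiv
    have hle : ‖fderiv ℝ (fun w => g w ^ (p / 2) * jap w ^ (-(3 : ℝ) / 2)) v‖ ≤
        g v ^ (p / 2) * 2 + B * g v ^ ((p - 1) / 2) := by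
      rw [hd]
      refine (norm_add_le _ _).trans ?_
      rw [norm_smul, norm_smul, Real.norm_of_nonneg (by positivity), Real.norm_of_nonneg (by positivity)]
      refine add_le_add ?_ ?_
      · gcongr; exact jap_fderiv_bound v
      · exact (mul_le_of_le_one_left (norm_nonneg _) hj1).trans (hB v)
    rw [Real.norm_of_nonneg (by positivity)]
    simp only [Pi.add_apply]
    rw [← hsq, ← hsq']
    calc _ ≤ (g v ^ (p / 2) * 2 + B * g v ^ ((p - 1) / 2)) ^ 2 := by gcongr
      _ ≤ _ := by nlinarith [sq_nonneg (g v ^ (p / 2) * 2 - B * g v ^ ((p - 1) / 2))]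

/-- the ε-Poincaré inequality. -/
theorem eps_poincare (p q : ℝ) (hp : 1 < p) (hq : 3 / 2 < q) :
    ∀ ε : ℝ, 0 < ε → ∃ C : ℝ, 0 < C ∧
      ∀ g : SchwartzMap V3 ℝ, (∀ v, 0 ≤ g v) →
        (∫ v : V3, g v ^ (p + 1)) ≤
          ε * (∫ v : V3, ∑ i : Fin 3,
              (pd i (fun w => g w ^ (p / 2) * jap w ^ (-(3 : ℝ) / 2)) v) ^ 2) +
            C * (∫ v : V3, (jap v ^ (3 : ℝ) * g v) ^ q) ^ (2 / (2 * q - 3)) *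
              (∫ v : V3, g v ^ p * jap v ^ (-(3 : ℝ))) := by
  intro ε hε
  obtain ⟨K, hK⟩ := sobolev_aux
  obtain ⟨C, hC0, hC⟩ := young_aux q hq ((K : ℝ) ^ 6) ε (by positivity) hε
  refine ⟨C, hC0, fun g hg => ?_⟩
  obtain ⟨hw, hw2, hDw⟩ := w_props p hp g hg
  set w : V3 → ℝ := fun w => g w ^ (p / 2) * jap w ^ (-(3 : ℝ) / 2) with hwd
  have hq0 : 0 < q := by linarith
  have hw0 : ∀ v, 0 ≤ w v := fun v => by
    have := hg v
    have := jap_pos v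
    simp only [hwd]; positivity
  have hwsq : ∀ v, w v ^ 2 = g v ^ p * jap v ^ (-(3 : ℝ)) := fun v => by
    simp only [hwd]
    rw [mul_pow, ← Real.rpow_natCast, ← Real.rpow_natCast, ← Real.rpow_mul (hg v),
      ← Real.rpow_mul (jap_pos v).le]
    congr 2 <;> push_cast <;> ring
  have hDc : Continuous (fderiv ℝ w) := hw.continuous_fderiv (by norm_num)
  set Y := ∫ v : V3, ∑ i : Fin 3, (pd i w v) ^ 2 with hY
  have hY0 : 0 ≤ Y := integral_nonneg fun v => Finset.sum_nonneg fun i _ => sq_nonneg _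
  have hYi : Integrable (fun v : V3 => ∑ i : Fin 3, (pd i w v) ^ 2) := by
    refine integrable_finsetSum _ fun i _ => ?_
    refine hDw.mono' ?_ (Eventually.of_forall fun v => ?_)
    · exact ((hDc.clm_apply continuous_const).pow 2).aestronglyMeasurable
    · rw [Real.norm_of_nonneg (sq_nonneg _), ← sq_abs]
      gcongr
      have := (fderiv ℝ w v).le_opNorm (EuclideanSpace.single i 1)
      simpa [pd] using this
  have hYle : ∫⁻ v, ‖fderiv ℝ w v‖ₑ ^ (2:ℝ) ≤ ENNReal.ofReal Y := by
    rw [hY, ofReal_integral_eq_lintegral_ofReal hYi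
      (Eventually.of_forall fun v => Finset.sum_nonneg fun i _ => sq_nonneg _)]
    refine lintegral_mono fun v => ?_
    rw [← ofReal_norm, ENNReal.ofReal_rpow_of_nonneg (norm_nonneg _) (by norm_num)]
    refine ENNReal.ofReal_le_ofReal ?_
    exact_mod_cast norm_sq_le_sum (fderiv ℝ w v)
  have hmem : MemLp w 2 volume :=
    (memLp_two_iff_integrable_sq hw.continuous.aestronglyMeasurable).2 hw2
  have hS := hK w hw hmem
  have h6 : ∫⁻ v, ENNReal.ofReal (w v ^ 6) ≤ ENNReal.ofReal ((K:ℝ) ^ 6 * Y ^ 3) := by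
    have c6 : ((6 : ℝ≥0) : ℝ) = ((6 : ℕ) : ℝ) := by norm_num
    have c2 : ((2 : ℝ≥0) : ℝ) = ((2 : ℕ) : ℝ) := by norm_num
    have d6 : ((6 : ℝ≥0) : ℝ≥0∞) = 6 := by norm_num
    have d2 : ((2 : ℝ≥0) : ℝ≥0∞) = 2 := by norm_num
    have e6 := eLpNorm_nnreal_pow_eq_lintegral (f := w) (μ := volume) (p := 6) (by norm_num)
    have e2 := eLpNorm_nnreal_pow_eq_lintegral (f := fderiv ℝ w) (μ := volume) (p := 2) (by norm_num)
    have l6 : ∫⁻ v, ENNReal.ofReal (w v ^ 6) = eLpNorm w 6 volume ^ 6 := by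
      calc _ = ∫⁻ v, ‖w v‖ₑ ^ (((6 : ℝ≥0) : ℝ)) := by
            refine lintegral_congr fun v => ?_
            rw [ENNReal.ofReal_pow (hw0 v), Real.enorm_of_nonneg (hw0 v), c6, ENNReal.rpow_natCast]
        _ = _ := by rw [← e6, c6, ENNReal.rpow_natCast, d6]
    have l2 : eLpNorm (fderiv ℝ w) 2 volume ^ 2 ≤ ENNReal.ofReal Y := by
      calc _ = ∫⁻ v, ‖fderiv ℝ w v‖ₑ ^ (((2 : ℝ≥0) : ℝ)) := by rw [← e2, c2, ENNReal.rpow_natCast, d2]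
        _ ≤ _ := hYle
    rw [l6]
    calc _ ≤ (K * eLpNorm (fderiv ℝ w) 2 volume) ^ 6 := by gcongr
      _ = (K:ℝ≥0∞) ^ 6 * (eLpNorm (fderiv ℝ w) 2 volume ^ 2) ^ 3 := by ring
      _ ≤ (K:ℝ≥0∞) ^ 6 * (ENNReal.ofReal Y) ^ 3 := by gcongr
      _ = _ := by
        rw [ENNReal.ofReal_mul (by positivity), ENNReal.ofReal_pow hY0, ENNReal.ofReal_pow (by positivity),
          ENNReal.ofReal_coe_nnreal]
  have hhc : Continuous (fun v => jap v ^ (3:ℝ) * g v) :=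
    (jap_cont.rpow_const (fun v => Or.inr (by norm_num))).mul g.continuous
  have hh0 : ∀ v, 0 ≤ jap v ^ (3:ℝ) * g v := fun v => by
    have := hg v
    have := jap_pos v
    positivity
  have hhq : Integrable (fun v => (jap v ^ (3:ℝ) * g v) ^ q) := by
    refine (integrable_aux g hg (3 * q) q (by positivity) hq0).congr (Eventually.of_forall fun v => ?_)
    have := jap_pos v
    beta_reduce
    rw [Real.mul_rpow (by positivity) (hg v), ← Real.rpow_mul this.le]
  have hH := holder_aux q hq _ w hhc hw.continuous hh0 hw0 hw2 hhq ((K:ℝ) ^ 6 * Y ^ 3)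
    (by positivity) h6
  have hfin := hC (∫ v : V3, (jap v ^ (3 : ℝ) * g v) ^ q) (∫ v, w v ^ 2) Y
    (integral_nonneg fun v => Real.rpow_nonneg (hh0 v) _) (integral_nonneg fun v => sq_nonneg _) hY0
  have hL : ∫ v : V3, g v ^ (p + 1) = ∫ v, jap v ^ (3:ℝ) * g v * w v ^ 2 := by
    refine integral_congr_ae (Eventually.of_forall fun v => ?_)
    have hj := jap_pos v
    beta_reduce
    rw [hwsq, Real.rpow_neg hj.le, Real.rpow_add_one' (hg v) (by linarith)]
    have : jap v ^ (3:ℝ) ≠ 0 := (Real.rpow_pos_of_pos hj _).ne'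
    field_simp
  rw [hL]
  simp only [← hwsq]
  exact hH.trans hfin
end
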